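/- For every real number $r > 0$ and every natural number $n$, $\frac{n+1}{n+1+r} \int_0^{r/(n+1+r)} x^{r-1}(1-x)^n\, dx < \int_0^{r/(n+2+r)} x^{r-1}(1-x)^{n+1}\, dx$. -/

import Mathlib

open Real intervalIntegral

/-!
Write `B(a; r, s)` for the incomplete beta function and `g(x) = x ^ r * (1 - x) ^ s`. Integrating
`g'` gives `(r + s) B(a; r, s + 1) = s B(a; r, s) + g(a)`. With `a = r / (s + r)` and
`b = r / (s + 1 + r)`, the claim is therefore that the integral of `g(x) / x` over `[b, a]` is less
than `g(a) / (s + r)`. Since `a` maximises `g`, that integral is less than `(a - b) g(a) / b`, and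
`(a - b) / b = 1 / (s + r)`.
-/

/-- The incomplete beta function `B(a; r, s)`, not divided by the complete beta integral; both sides
of the inequality are values of it. For `a < 1` the integral converges as soon as `0 < r`. -/
noncomputable def incompleteBeta (r s a : ℝ) : ℝ :=
  ∫ x in (0 : ℝ)..a, x ^ (r - 1) * (1 - x) ^ (s - 1)

theorem hasDerivAt_rpow_mul_one_sub_rpow (r s : ℝ) {x : ℝ} (hx₀ : x ≠ 0) (hx₁ : x ≠ 1) :
    HasDerivAt (fun x : ℝ ↦ x ^ r * (1 - x) ^ s)
      ((r + s) * (x ^ (r - 1) * (1 - x) ^ s) - s * (x ^ (r - 1) * (1 - x) ^ (s - 1))) x := by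
  have hx₁' : 1 - x ≠ 0 := sub_ne_zero.mpr hx₁.symm
  have hleft : HasDerivAt (fun x : ℝ ↦ x ^ r) (r * x ^ (r - 1)) x :=
    hasDerivAt_rpow_const (.inl hx₀)
  have hright : HasDerivAt (fun x : ℝ ↦ (1 - x) ^ s) (-1 * s * (1 - x) ^ (s - 1)) x :=
    ((hasDerivAt_id x).const_sub 1).rpow_const (.inl hx₁')
  refine (hleft.mul hright).congr_deriv ?_
  rw [rpow_sub_one hx₀, rpow_sub_one hx₁']
  field_simp
  ring

theorem rpow_mul_one_sub_rpow_le {r s x : ℝ} (hr : 0 < r) (hs : 0 < s) (hx₀ : 0 ≤ x)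
    (hx₁ : x ≤ 1) :
    x ^ r * (1 - x) ^ s ≤ (r / (s + r)) ^ r * (1 - r / (s + r)) ^ s := by
  have hsr : 0 < s + r := by positivity
  set a := r / (s + r) with ha
  have ha₀ : 0 < a := by positivity
  have hsa : 1 - a = s / (s + r) := by
    rw [ha, one_sub_div hsr.ne', add_sub_cancel_right]
  have ha₁ : 0 < 1 - a := by rw [hsa]; positivity
  have hu : 0 ≤ x / a := by positivity
  have hv : 0 ≤ (1 - x) / (1 - a) := div_nonneg (sub_nonneg.mpr hx₁) ha₁.le
  -- The weights `a` and `1 - a` turn the arithmetic mean of the two ratios into `x + (1 - x)`.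
  have amgm : (x / a) ^ a * ((1 - x) / (1 - a)) ^ (1 - a) ≤ 1 :=
    calc
      _ ≤ a * (x / a) + (1 - a) * ((1 - x) / (1 - a)) :=
        geom_mean_le_arith_mean2_weighted ha₀.le ha₁.le hu hv (by ring)
      _ = 1 := by field_simp; ring
  have ratio : (x / a) ^ r * ((1 - x) / (1 - a)) ^ s ≤ 1 :=
    calc
      _ = ((x / a) ^ a * ((1 - x) / (1 - a)) ^ (1 - a)) ^ (s + r) := by
        rw [mul_rpow (by positivity) (by positivity), ← rpow_mul hu, ← rpow_mul hv, hsa, ha,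
          div_mul_cancel₀ _ hsr.ne', div_mul_cancel₀ _ hsr.ne']
      _ ≤ 1 := rpow_le_one (by positivity) amgm hsr.le
  rwa [div_rpow hx₀ ha₀.le, div_rpow (sub_nonneg.mpr hx₁) ha₁.le, div_mul_div_comm,
    div_le_one (by positivity)] at ratio

theorem continuousOn_one_sub_rpow (s : ℝ) : ContinuousOn (fun x : ℝ ↦ (1 - x) ^ s) (Set.Iio 1) :=
  (continuousOn_const.sub continuousOn_id).rpow_const fun _ hx ↦ .inl (sub_pos.mpr hx).ne'

theorem intervalIntegrable_rpow_mul_one_sub_rpow {p : ℝ} (hp : -1 < p) (q : ℝ) {u v : ℝ}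
    (hu : u < 1) (hv : v < 1) :
    IntervalIntegrable (fun x : ℝ ↦ x ^ p * (1 - x) ^ q) MeasureTheory.volume u v :=
  (intervalIntegrable_rpow' hp).mul_continuousOn <|
    (continuousOn_one_sub_rpow q).mono (Set.ordConnected_Iio.uIcc_subset hu hv)

theorem incompleteBeta_add_one_right {r a : ℝ} (hr : 0 < r) (s : ℝ) (ha₀ : 0 ≤ a) (ha₁ : a < 1) :
    (r + s) * incompleteBeta r (s + 1) a = s * incompleteBeta r s a + a ^ r * (1 - a) ^ s := by
  have hcont : ContinuousOn (fun x : ℝ ↦ x ^ r * (1 - x) ^ s) (Set.Icc 0 a) :=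
    (continuous_rpow_const hr.le).continuousOn.mul <|
      (continuousOn_one_sub_rpow s).mono fun _ hx ↦ hx.2.trans_lt ha₁
  have hint (q : ℝ) := intervalIntegrable_rpow_mul_one_sub_rpow (p := r - 1) (by linarith) q
    zero_lt_one ha₁
  have ftc := integral_eq_sub_of_hasDerivAt_of_le ha₀ hcont
    (fun x hx ↦ hasDerivAt_rpow_mul_one_sub_rpow r s hx.1.ne' (hx.2.trans ha₁).ne)
    (((hint s).const_mul _).sub ((hint (s - 1)).const_mul _))
  rw [integral_sub ((hint s).const_mul _) ((hint (s - 1)).const_mul _), integral_const_mul,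
    integral_const_mul, zero_rpow hr.ne', zero_mul, sub_zero] at ftc
  rw [incompleteBeta, incompleteBeta, add_sub_cancel_right]
  linarith

theorem incompleteBeta_sub_lt {r s b c : ℝ} (hr : 0 < r) (hs : 0 < s) (hb : 0 < b) (hbc : b < c)
    (hc : c < 1) :
    incompleteBeta r (s + 1) c - incompleteBeta r (s + 1) b <
      (c - b) * ((r / (s + r)) ^ r * (1 - r / (s + r)) ^ s / b) := by
  set M := (r / (s + r)) ^ r * (1 - r / (s + r)) ^ s
  have hM : 0 < M := by
    have hsr : s + r ≠ 0 := by positivity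
    simp only [M, one_sub_div hsr, add_sub_cancel_right]
    positivity
  have hbound {x : ℝ} (hx : x ∈ Set.Icc b c) : x ^ (r - 1) * (1 - x) ^ s ≤ M / x := by
    have hx₀ : 0 < x := hb.trans_le hx.1
    rw [rpow_sub_one hx₀.ne', div_mul_eq_mul_div]
    gcongr
    exact rpow_mul_one_sub_rpow_le hr hs hx₀.le (hx.2.trans hc.le)
  have hcont : ContinuousOn (fun x : ℝ ↦ x ^ (r - 1) * (1 - x) ^ s) (Set.Icc b c) :=
    (continuousOn_id.rpow_const fun _ hx ↦ .inl (hb.trans_le hx.1).ne').mul <|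
      (continuousOn_one_sub_rpow s).mono fun _ hx ↦ hx.2.trans_lt hc
  have hint {v : ℝ} := intervalIntegrable_rpow_mul_one_sub_rpow (p := r - 1) (v := v)
    (by linarith) s zero_lt_one
  calc
    _ = ∫ x in b..c, x ^ (r - 1) * (1 - x) ^ s := by
      rw [incompleteBeta, incompleteBeta, add_sub_cancel_right,
        integral_interval_sub_left (hint hc) (hint (hbc.trans hc))]
    _ < ∫ _ in b..c, M / b := by
      refine integral_lt_integral_of_continuousOn_of_le_of_exists_lt hbc hcont continuousOn_const
        (fun x hx ↦ ?_) ⟨c, Set.right_mem_Icc.mpr hbc.le, ?_⟩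
      · exact (hbound (Set.Ioc_subset_Icc_self hx)).trans (by gcongr; exact hx.1.le)
      · exact (hbound (Set.right_mem_Icc.mpr hbc.le)).trans_lt (by gcongr)
    _ = _ := by rw [integral_const, smul_eq_mul]

theorem integral_ineq_general {r s : ℝ} (hr : 0 < r) (hs : 0 < s) :
    s / (s + r) * incompleteBeta r s (r / (s + r)) <
      incompleteBeta r (s + 1) (r / (s + 1 + r)) := by
  set a := r / (s + r) with ha
  set b := r / (s + 1 + r) with hb
  have hb₀ : 0 < b := by positivity
  have hba : b < a := by rw [ha, hb]; gcongr; linarith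
  have ha₁ : a < 1 := by rw [ha, div_lt_one (by positivity)]; linarith
  have hgap : (a - b) / b = 1 / (s + r) := by rw [ha, hb]; field_simp; ring
  have hrec := incompleteBeta_add_one_right hr s (hb₀.trans hba).le ha₁
  calc
    _ = incompleteBeta r (s + 1) a - a ^ r * (1 - a) ^ s / (s + r) := by
      field_simp
      linarith
    _ = incompleteBeta r (s + 1) a - (a - b) * (a ^ r * (1 - a) ^ s / b) := by
      linear_combination a ^ r * (1 - a) ^ s * hgap
    _ < incompleteBeta r (s + 1) b := by
      linarith [incompleteBeta_sub_lt hr hs hb₀ hba ha₁]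

/-- For real `r > 0` and `n ∈ ℕ`,
`((n+1)/(n+1+r)) ∫_0^{r/(n+1+r)} x^{r-1}(1-x)^n dx < ∫_0^{r/(n+2+r)} x^{r-1}(1-x)^{n+1} dx`. -/
theorem integral_ineq (r : ℝ) (hr : 0 < r) (n : ℕ) :
    (n + 1) / (n + 1 + r) * ∫ x in (0:ℝ)..(r / (n + 1 + r)), x ^ (r - 1) * (1 - x) ^ n
      < ∫ x in (0:ℝ)..(r / (n + 2 + r)), x ^ (r - 1) * (1 - x) ^ (n + 1) := by
  have := integral_ineq_general hr n.cast_add_one_pos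
  simp only [incompleteBeta, add_sub_cancel_right] at this
  exact_mod_cast this
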